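/- Let n jobs be given, where job j has processing time p_j ∈ ℕ, weight w_j ∈ ℕ, release date r_j ∈ ℕ and due date d_j ∈ ℕ. For J ⊆ {1,…,n}, t ∈ ℕ∞ and ε ∈ ℤ, define OPT[J,t,ε] ∈ ℕ∞ as the minimum makespan (completion time of the last job) over all schedules of J starting at time t whose weighted number of late jobs ∑_{j∈J} w_j·𝟙[C_j > d_j] equals ε; set OPT[J,t,ε] = ∞ if t = ∞, if ε < 0, or if no such schedule exists. Then for every J ⊆ {1,…,n} with |J| ≥ 2, every t ∈ ℕ and every ε ∈ ℤ, OPT[J,t,ε] = min_{j∈J} min( OPT[{j}, OPT[J∖{j}, t, ε], 0], OPT[{j}, OPT[J∖{j}, t, ε − w_j], w_j] ). -/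

import Mathlib

/-- `ValidFrom p r t s` : the list `s` of pairs (job, completion time) is a valid
schedule starting at time `t` : the first job `j` satisfies
`C_j ≥ max t (r j) + p j`, and each further job `j` satisfies
`C_j ≥ max C_prev (r j) + p j` (idle time is allowed). -/
def ValidFrom {n : ℕ} (p r : Fin n → ℕ) : ℕ → List (Fin n × ℕ) → Prop
  | _, [] => True
  | t, (j, c) :: s => max t (r j) + p j ≤ c ∧ ValidFrom p r c s

/-- The makespan of a schedule : the completion time of its last job. -/
def makespan {n : ℕ} (s : List (Fin n × ℕ)) : ℕ :=
  ((s.map Prod.snd).getLast?).getD 0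

/-- The weighted number of late jobs `∑_j w j * 𝟙[C_j > d j]` of a schedule. -/
def lateWeight {n : ℕ} (w d : Fin n → ℕ) (s : List (Fin n × ℕ)) : ℕ :=
  (s.map fun jc => if d jc.1 < jc.2 then w jc.1 else 0).sum

/-- `OPT p w r d J t ε` : minimum makespan over all schedules of the jobs of `J`
starting at time `t` whose weighted number of late jobs equals `ε`
(`⊤` if `t = ⊤`, if `ε < 0`, or if no such schedule exists). -/
noncomputable def OPT {n : ℕ} (p w r d : Fin n → ℕ) (J : Finset (Fin n))
    (t : ℕ∞) (ε : ℤ) : ℕ∞ :=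
  sInf { v : ℕ∞ | ∃ t₀ : ℕ, (t₀ : ℕ∞) = t ∧ ∃ s : List (Fin n × ℕ),
    (s.map Prod.fst).Nodup ∧ (s.map Prod.fst).toFinset = J ∧
    ValidFrom p r t₀ s ∧ (lateWeight w d s : ℤ) = ε ∧ v = (makespan s : ℕ∞) }

/-!
In a schedule of at least two jobs, whether the last job `j` is late depends on its completion
time only, so the other jobs account for late weight `ε` or `ε - w j`. Their part of the schedule
may be exchanged for a schedule with the same late weight and minimum makespan: this lets `j` start
no later, and since idle time is allowed the completion time of `j` can be kept.
-/

section Schedules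

variable {n : ℕ} {p w r d : Fin n → ℕ} {J K : Finset (Fin n)} {s s' : List (Fin n × ℕ)}

theorem makespan_append (s : List (Fin n × ℕ)) (hs' : s' ≠ []) :
    makespan (s ++ s') = makespan s' := by
  simp [makespan, List.getLast?_append, List.getLast?_eq_some_getLast hs']

theorem lateWeight_append (w d : Fin n → ℕ) (s s' : List (Fin n × ℕ)) :
    lateWeight w d (s ++ s') = lateWeight w d s + lateWeight w d s' := by
  simp [lateWeight]

theorem lateWeight_singleton (w d : Fin n → ℕ) (jc : Fin n × ℕ) :
    lateWeight w d [jc] = if d jc.1 < jc.2 then w jc.1 else 0 := by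
  simp [lateWeight]

theorem ValidFrom.anti {t t' : ℕ} (h : ValidFrom p r t' s) (htt' : t ≤ t') :
    ValidFrom p r t s := by
  cases s with
  | nil => trivial
  | cons jc s => exact ⟨le_trans (by gcongr) h.1, h.2⟩

theorem validFrom_append (hs : s ≠ []) (s' : List (Fin n × ℕ)) (t : ℕ) :
    ValidFrom p r t (s ++ s') ↔ ValidFrom p r t s ∧ ValidFrom p r (makespan s) s' := by
  induction s generalizing t with
  | nil => contradiction
  | cons jc s ih =>
    rcases eq_or_ne s [] with rfl | h
    · simp [ValidFrom, makespan]
    · have hm : makespan (jc :: s) = makespan s := makespan_append [jc] h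
      simp [ValidFrom, ih h, hm, and_assoc]

/-- `IsSchedule p r J t s`: the list `s` of pairs (job, completion time) is a schedule of the set
of jobs `J` starting at time `t`. The late weight is left out, so that being a schedule does not
depend on weights and due dates; `OPT` minimizes over the schedules of a given late weight. -/
structure IsSchedule (p r : Fin n → ℕ) (J : Finset (Fin n)) (t : ℕ) (s : List (Fin n × ℕ)) :
    Prop where
  nodup : (s.map Prod.fst).Nodup
  toFinset_eq : (s.map Prod.fst).toFinset = J
  validFrom : ValidFrom p r t s

theorem IsSchedule.anti {t t' : ℕ} (h : IsSchedule p r J t' s) (htt' : t ≤ t') :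
    IsSchedule p r J t s :=
  ⟨h.nodup, h.toFinset_eq, h.validFrom.anti htt'⟩

theorem IsSchedule.ne_nil_iff {t : ℕ} (h : IsSchedule p r J t s) : s ≠ [] ↔ J.Nonempty := by
  simp [← h.toFinset_eq, List.toFinset_nonempty_iff]

theorem isSchedule_append_iff {t : ℕ} (hs : s ≠ []) :
    IsSchedule p r J t (s ++ s') ↔
      ∃ K ⊆ J, IsSchedule p r (J \ K) t s ∧ IsSchedule p r K (makespan s) s' := by
  constructor
  · rintro ⟨hnd, rfl, hv⟩
    rw [List.map_append, List.nodup_append'] at hnd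
    obtain ⟨hnds, hnds', hdisj⟩ := hnd
    obtain ⟨hvs, hvs'⟩ := (validFrom_append hs s' t).1 hv
    rw [List.map_append, List.toFinset_append]
    refine ⟨_, Finset.subset_union_right, ⟨hnds, ?_, hvs⟩, ⟨hnds', rfl, hvs'⟩⟩
    exact (Finset.union_sdiff_cancel_right (List.disjoint_toFinset_iff_disjoint.2 hdisj)).symm
  · rintro ⟨K, hKJ, hs₁, hs₂⟩
    have hdisj : Disjoint (s.map Prod.fst).toFinset (s'.map Prod.fst).toFinset := by
      rw [hs₁.toFinset_eq, hs₂.toFinset_eq]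
      exact Finset.sdiff_disjoint
    refine ⟨?_, ?_, (validFrom_append hs s' t).2 ⟨hs₁.validFrom, hs₂.validFrom⟩⟩
    · rw [List.map_append, List.nodup_append']
      exact ⟨hs₁.nodup, hs₂.nodup, List.disjoint_toFinset_iff_disjoint.1 hdisj⟩
    · rw [List.map_append, List.toFinset_append, hs₁.toFinset_eq, hs₂.toFinset_eq,
        Finset.sdiff_union_of_subset hKJ]

theorem IsSchedule.OPT_le_makespan {t : ℕ} (h : IsSchedule p r J t s) :
    OPT p w r d J t (lateWeight w d s) ≤ makespan s :=
  sInf_le ⟨t, rfl, s, h.nodup, h.toFinset_eq, h.validFrom, rfl, rfl⟩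

theorem exists_isSchedule_of_OPT_eq_natCast {t : ℕ∞} {ε : ℤ} {m : ℕ}
    (h : OPT p w r d J t ε = m) :
    ∃ t₀ : ℕ, t₀ = t ∧ ∃ s, IsSchedule p r J t₀ s ∧ lateWeight w d s = ε ∧ makespan s = m := by
  have hne : OPT p w r d J t ε ≠ ⊤ := h ▸ ENat.natCast_ne_top m
  obtain ⟨t₀, ht₀, s, hnd, hJ, hv, hε, hm⟩ :=
    csInf_mem (Set.nonempty_iff_ne_empty.2 fun he => hne ((congrArg sInf he).trans sInf_empty))
  exact ⟨t₀, ht₀, s, ⟨hnd, hJ, hv⟩, hε, by exact_mod_cast hm.symm.trans h⟩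

theorem OPT_mono (p w r d : Fin n → ℕ) (J : Finset (Fin n)) (ε : ℤ) :
    Monotone fun t => OPT p w r d J t ε := by
  intro t t' htt'
  dsimp only
  cases h : OPT p w r d J t' ε with
  | top => exact le_top
  | coe m =>
    obtain ⟨t', rfl, s, hs, rfl, rfl⟩ := exists_isSchedule_of_OPT_eq_natCast h
    lift t to ℕ using ne_top_of_le_ne_top (ENat.natCast_ne_top t') htt'
    exact (hs.anti (by exact_mod_cast htt')).OPT_le_makespan

theorem OPT_add_le (hKJ : K ⊂ J) (hK : K.Nonempty) (t : ℕ∞) (x y : ℤ) :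
    OPT p w r d J t (x + y) ≤ OPT p w r d K (OPT p w r d (J \ K) t x) y := by
  cases h : OPT p w r d K (OPT p w r d (J \ K) t x) y with
  | top => exact le_top
  | coe m =>
    obtain ⟨t₁, ht₁, s', hs', rfl, rfl⟩ := exists_isSchedule_of_OPT_eq_natCast h
    obtain ⟨t₀, rfl, s, hs, rfl, rfl⟩ := exists_isSchedule_of_OPT_eq_natCast ht₁.symm
    have hs_ne : s ≠ [] := hs.ne_nil_iff.2 (Finset.sdiff_nonempty.2 hKJ.2)
    have hss' : IsSchedule p r J t₀ (s ++ s') :=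
      (isSchedule_append_iff hs_ne).2 ⟨K, hKJ.1, hs, hs'⟩
    rw [← Nat.cast_add, ← lateWeight_append, ← makespan_append s (hs'.ne_nil_iff.2 hK)]
    exact hss'.OPT_le_makespan

theorem IsSchedule.OPT_OPT_sdiff_le_makespan {t : ℕ} (hs : IsSchedule p r (J \ K) t s)
    (hs' : IsSchedule p r K (makespan s) s') :
    OPT p w r d K (OPT p w r d (J \ K) t (lateWeight w d s)) (lateWeight w d s') ≤
      makespan s' :=
  (OPT_mono p w r d K _ hs.OPT_le_makespan).trans hs'.OPT_le_makespan

theorem exists_OPT_singleton_le (hJ : J.Nontrivial) {t : ℕ∞} {ε : ℤ}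
    (h : OPT p w r d J t ε ≠ ⊤) :
    ∃ j ∈ J, ∃ y : ℤ, (y = 0 ∨ y = w j) ∧
      OPT p w r d {j} (OPT p w r d (J.erase j) t (ε - y)) y ≤ OPT p w r d J t ε := by
  obtain ⟨m, hm⟩ := ENat.ne_top_iff_exists.1 h
  obtain ⟨t, rfl, u, hu, rfl, rfl⟩ := exists_isSchedule_of_OPT_eq_natCast hm.symm
  obtain ⟨s, jc, rfl⟩ := (List.eq_nil_or_concat' u).resolve_left (hu.ne_nil_iff.2 hJ.nonempty)
  have hs_ne : s ≠ [] := by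
    rintro rfl
    exact hJ.ne_singleton (by simpa using hu.toFinset_eq.symm)
  obtain ⟨K, hKJ, hs, hjc⟩ := (isSchedule_append_iff hs_ne).1 hu
  obtain rfl : {jc.1} = K := by simpa using hjc.toFinset_eq
  refine ⟨jc.1, Finset.singleton_subset_iff.1 hKJ, lateWeight w d [jc], ?_, ?_⟩
  · rw [lateWeight_singleton]
    split_ifs <;> simp
  · rw [← hm, makespan_append s (List.cons_ne_nil jc []), lateWeight_append, Nat.cast_add,
      add_sub_cancel_right, Finset.erase_eq]
    exact hs.OPT_OPT_sdiff_le_makespan hjc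

end Schedules

theorem stmt6 {n : ℕ} (p w r d : Fin n → ℕ) (J : Finset (Fin n)) (hJ : 2 ≤ J.card)
    (t : ℕ) (ε : ℤ) :
    OPT p w r d J (t : ℕ∞) ε =
      ⨅ j ∈ J,
        min (OPT p w r d {j} (OPT p w r d (J.erase j) (t : ℕ∞) ε) 0)
            (OPT p w r d {j} (OPT p w r d (J.erase j) (t : ℕ∞) (ε - (w j : ℤ))) (w j)) := by
  have hJ' : J.Nontrivial := Finset.one_lt_card_iff_nontrivial.1 hJ
  apply le_antisymm
  · refine le_iInf₂ fun j hj => ?_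
    have hjJ : {j} ⊂ J :=
      (Finset.singleton_subset_iff.2 hj).ssubset_of_ne hJ'.ne_singleton.symm
    have hadd := OPT_add_le (p := p) (w := w) (r := r) (d := d) hjJ (Finset.singleton_nonempty j) t
    rw [Finset.erase_eq]
    exact le_min (by simpa using hadd ε 0) (by simpa using hadd (ε - w j) (w j))
  · by_cases h : OPT p w r d J t ε = ⊤
    · exact h ▸ le_top
    obtain ⟨j, hj, y, rfl | rfl, hle⟩ := exists_OPT_singleton_le hJ' h
    · exact iInf₂_le_of_le j hj (min_le_of_left_le (by simpa using hle))
    · exact iInf₂_le_of_le j hj (min_le_of_right_le hle)
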